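/- arXiv:1706.01152 — 3 statements merged into one kernel-verified Lean document; each statement's English description precedes it below -/
import Mathlib

section
/- Let R be a (unital, possibly noncommutative) ring, and let G and H be finite additive abelian groups whose orders are coprime. Suppose the product group G × H (with componentwise addition) is equipped with an R-module structure. Then the action of R on G × H is componentwise: for every r ∈ R, g ∈ G, and h ∈ H, the second component of r • (g, 0) equals 0, the first component of r • (0, h) equals 0, and consequently r • (g, h) = (first component of r • (g, 0), second component of r • (0, h)). In particular, the subgroups G × {0} and {0} × H are submodules of G × H. -/
/-!
For coprime orders, every additive map `G →+ H` or `H →+ G` vanishes, because the order of an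
image divides coprime numbers. Hence the off-diagonal entries of any additive endomorphism of
`G × H` are zero, and each scalar acts by such an endomorphism.
-/

section CoprimeOrders

@[to_additive]
theorem subsingleton_monoidHom_of_coprime_orderOf {A B : Type*} [Monoid A] [Monoid B]
    (hcop : ∀ (a : A) (b : B), (orderOf a).Coprime (orderOf b)) : Subsingleton (A →* B) := by
  refine subsingleton_of_forall_eq 1 fun f ↦ MonoidHom.ext fun a ↦ ?_
  exact orderOf_eq_one_iff.mp ((hcop a (f a)).symm.eq_one_of_dvd (orderOf_map_dvd f a))

@[to_additive]
theorem subsingleton_monoidHom_of_coprime_natCard {A B : Type*} [Group A] [Group B]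
    (hcop : (Nat.card A).Coprime (Nat.card B)) : Subsingleton (A →* B) :=
  subsingleton_monoidHom_of_coprime_orderOf fun a b ↦
    hcop.of_dvd (orderOf_dvd_natCard a) (orderOf_dvd_natCard b)

end CoprimeOrders

section DiagonalMaps

variable {G H K L : Type*} [AddZeroClass G] [AddZeroClass H] [AddZeroClass K] [AddZeroClass L]

theorem snd_map_prodMk_zero [Subsingleton (G →+ L)] (f : G × H →+ K × L) (g : G) :
    (f (g, 0)).2 = 0 :=
  DFunLike.congr_fun
    (Subsingleton.elim ((AddMonoidHom.snd K L).comp (f.comp (AddMonoidHom.inl G H))) 0) g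

theorem fst_map_zero_prodMk [Subsingleton (H →+ K)] (f : G × H →+ K × L) (h : H) :
    (f (0, h)).1 = 0 :=
  DFunLike.congr_fun
    (Subsingleton.elim ((AddMonoidHom.fst K L).comp (f.comp (AddMonoidHom.inr G H))) 0) h

theorem map_prodMk_eq_componentwise [Subsingleton (G →+ L)] [Subsingleton (H →+ K)]
    (f : G × H →+ K × L) (g : G) (h : H) :
    f (g, h) = ((f (g, 0)).1, (f (0, h)).2) := by
  have hsplit : f (g, h) = f (g, 0) + f (0, h) := by
    rw [← map_add, Prod.mk_add_mk, add_zero, zero_add]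
  rw [hsplit]
  ext
  · rw [Prod.fst_add, fst_map_zero_prodMk, add_zero]
  · rw [Prod.snd_add, snd_map_prodMk_zero, zero_add]

end DiagonalMaps

section Factors

variable (R G H : Type*) [Semiring R] [AddCommMonoid G] [AddCommMonoid H] [Module R (G × H)]

/-- The factor `G × {0}` as a submodule of `G × H`, where `R` acts on the product only and not on
`G` or `H`; it is encoded as the kernel of the second projection. -/
def leftFactor [Subsingleton (G →+ H)] : Submodule R (G × H) where
  __ := AddMonoidHom.mker (AddMonoidHom.snd G H)
  smul_mem' := by
    rintro r ⟨g, _⟩ rfl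
    exact snd_map_prodMk_zero (DistribSMul.toAddMonoidHom (G × H) r) g

/-- The factor `{0} × H` as a submodule of `G × H`, where `R` acts on the product only and not on
`G` or `H`; it is encoded as the kernel of the first projection. -/
def rightFactor [Subsingleton (H →+ G)] : Submodule R (G × H) where
  __ := AddMonoidHom.mker (AddMonoidHom.fst G H)
  smul_mem' := by
    rintro r ⟨_, h⟩ rfl
    exact fst_map_zero_prodMk (DistribSMul.toAddMonoidHom (G × H) r) h

end Factors

theorem stmt_0_general (R G H : Type*) [Semiring R] [AddCommMonoid G] [AddCommMonoid H]
    [Subsingleton (G →+ H)] [Subsingleton (H →+ G)] [Module R (G × H)] :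
    (∀ (r : R) (g : G) (h : H),
      (r • ((g, 0) : G × H)).2 = 0 ∧
      (r • ((0, h) : G × H)).1 = 0 ∧
      r • ((g, h) : G × H) = ((r • ((g, 0) : G × H)).1, (r • ((0, h) : G × H)).2)) ∧
    (∃ N : Submodule R (G × H), (N : Set (G × H)) = {p : G × H | p.2 = 0}) ∧
    (∃ N : Submodule R (G × H), (N : Set (G × H)) = {p : G × H | p.1 = 0}) := by
  refine ⟨fun r g h ↦ ?_, ⟨leftFactor R G H, rfl⟩, ⟨rightFactor R G H, rfl⟩⟩
  let action := DistribSMul.toAddMonoidHom (G × H) r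
  exact ⟨snd_map_prodMk_zero action g, fst_map_zero_prodMk action h,
    map_prodMk_eq_componentwise action g h⟩

/-- If `G` and `H` are finite abelian groups of coprime orders, then any `R`-module
structure on `G × H` acts componentwise, and `G × {0}` and `{0} × H` are submodules. -/
theorem stmt_0 (R : Type*) [Ring R] (G H : Type*) [AddCommGroup G] [AddCommGroup H]
    [Fintype G] [Fintype H] (hcop : Nat.Coprime (Fintype.card G) (Fintype.card H))
    [Module R (G × H)] :
    (∀ (r : R) (g : G) (h : H),
      (r • ((g, 0) : G × H)).2 = 0 ∧
      (r • ((0, h) : G × H)).1 = 0 ∧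
      r • ((g, h) : G × H) = ((r • ((g, 0) : G × H)).1, (r • ((0, h) : G × H)).2)) ∧
    (∃ N : Submodule R (G × H), (N : Set (G × H)) = {p : G × H | p.2 = 0}) ∧
    (∃ N : Submodule R (G × H), (N : Set (G × H)) = {p : G × H | p.1 = 0}) := by
  simp only [Fintype.card_eq_nat_card] at hcop
  have := subsingleton_addMonoidHom_of_coprime_natCard hcop
  have := subsingleton_addMonoidHom_of_coprime_natCard hcop.symm
  exact stmt_0_general R G H
end

section
/- Let R be a finite nontrivial ring. Then there exist a positive integer t, a finite field F, and a surjective ring homomorphism from R onto the matrix ring M_t(F) of t × t matrices over F. -/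
/-!
The quotient of a nontrivial ring by its Jacobson radical is nontrivial with zero radical, so it is
semisimple as soon as it is finite. By Wedderburn–Artin it is then a nonempty product of matrix
rings over division rings; these division rings are finite, hence fields by Wedderburn's little
theorem. Projecting onto any one of the factors gives the required surjection.
-/

universe u v

theorem isSemisimpleRing_quotient_jacobson (R : Type*) [Ring R]
    [IsArtinianRing (R ⧸ Ring.jacobson R)] : IsSemisimpleRing (R ⧸ Ring.jacobson R) :=
  IsArtinianRing.isSemisimpleRing_iff_jacobson.mpr (Ring.jacobson_quotient_jacobson R)

theorem exists_surjective_matrix_divisionRing (R : Type u) [Ring R] [Nontrivial R]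
    [IsSemisimpleRing R] :
    ∃ (t : ℕ) (D : Type u) (_ : DivisionRing D) (φ : R →+* Matrix (Fin t) (Fin t) D),
      0 < t ∧ Function.Surjective φ := by
  obtain ⟨n, D, d, _, hd, ⟨e⟩⟩ := IsSemisimpleRing.exists_ringEquiv_pi_matrix_divisionRing R
  have : Nonempty (Fin n) := by
    by_contra! _
    exact not_subsingleton R e.toEquiv.subsingleton
  obtain ⟨i⟩ := this
  exact ⟨d i, D i, inferInstance, (Pi.evalRingHom _ i).comp e.toRingHom, (hd i).pos,
    (Function.surjective_eval i).comp e.surjective⟩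

theorem finite_of_finite_matrix (m n : Type*) {α : Type*} [Nonempty m] [Nonempty n]
    [Finite (Matrix m n α)] : Finite α :=
  Finite.of_injective (fun a ↦ (Matrix.of fun _ _ ↦ a : Matrix m n α))
    (Matrix.of.injective.comp (Function.const_injective.comp Function.const_injective))

theorem exists_field_ringEquiv_of_finite (D : Type u) [DivisionRing D] [Finite D] :
    ∃ (F : Type v) (_ : Field F) (_ : Fintype F), Nonempty (D ≃+* F) :=
  let _ : Field D := littleWedderburn D
  ⟨Shrink.{v} D, inferInstance, Fintype.ofFinite _, ⟨(Shrink.ringEquiv.{v} D).symm⟩⟩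

theorem stmt_2_general (R : Type*) [Ring R] [Nontrivial R] [Finite (R ⧸ Ring.jacobson R)] :
    ∃ (t : ℕ) (F : Type) (_ : Field F) (_ : Fintype F)
      (φ : R →+* Matrix (Fin t) (Fin t) F), 0 < t ∧ Function.Surjective φ := by
  have : Nontrivial (R ⧸ Ring.jacobson R) :=
    Ideal.Quotient.nontrivial_iff.mpr (Ring.jacobson_lt_top R).ne
  have : IsSemisimpleRing (R ⧸ Ring.jacobson R) := isSemisimpleRing_quotient_jacobson R
  obtain ⟨t, D, _, φ, ht, hφ⟩ := exists_surjective_matrix_divisionRing (R ⧸ Ring.jacobson R)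
  have : Finite (Matrix (Fin t) (Fin t) D) := Finite.of_surjective φ hφ
  have : Nonempty (Fin t) := ⟨⟨0, ht⟩⟩
  have : Finite D := finite_of_finite_matrix (Fin t) (Fin t)
  obtain ⟨F, _, _, ⟨e⟩⟩ := exists_field_ringEquiv_of_finite D
  let ψ : Matrix (Fin t) (Fin t) D ≃+* Matrix (Fin t) (Fin t) F := e.mapMatrix
  exact ⟨t, F, inferInstance, inferInstance,
    (ψ.toRingHom.comp φ).comp (Ideal.Quotient.mk (Ring.jacobson R)), ht,
    (ψ.surjective.comp hφ).comp Ideal.Quotient.mk_surjective⟩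

/-- Every finite nontrivial ring admits a surjective ring homomorphism onto a
matrix ring `M_t(F)` over a finite field `F`, for some positive integer `t`. -/
theorem stmt_2 (R : Type*) [Ring R] [Fintype R] [Nontrivial R] :
    ∃ (t : ℕ) (F : Type) (_ : Field F) (_ : Fintype F)
      (φ : R →+* Matrix (Fin t) (Fin t) F), 0 < t ∧ Function.Surjective φ :=
  stmt_2_general R
end

section
/- Let K be a field and let f : M₂(K) → M₂(K) be the map sending a 2 × 2 matrix X to the matrix obtained by keeping its diagonal entries and replacing its off-diagonal entries with 0, i.e., f(X) = diagonal(X₁₁, X₂₂). Then there do not exist matrices A, B ∈ M₂(K) such that f(X) = A · X · B for all X ∈ M₂(K). -/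
/-!
If `A * X * B` is the diagonal part of `X` for every `X`, then `X = 1` gives `A * B = 1`.
Substituting `X = B * Y` turns `A * X * B` into `Y * B`, so every left multiple of `B` is diagonal.
Left multiples can move any entry of `B` to an off-diagonal position, so `B = 0`, contradicting
`A * B = 1`.
-/

section

variable {R m n : Type*} [Fintype m] [Nontrivial n]

theorem eq_zero_of_forall_isDiag_mul [NonAssocSemiring R] {B : Matrix m n R}
    (hB : ∀ Y : Matrix n m R, (Y * B).IsDiag) : B = 0 := by
  classical
  ext k l
  obtain ⟨i, hil⟩ := exists_ne l
  calc
    B k l = (Matrix.single i k (1 : R) * B) i l := by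
      rw [Matrix.single_mul_apply_same, one_mul]
    _ = 0 := hB _ hil

variable [Finite n] [DecidableEq n] [Semiring R] [Nontrivial R]

theorem mul_ne_one_of_forall_isDiag_mul_mul {A : Matrix n m R} {B : Matrix m n R}
    (hdiag : ∀ X : Matrix m m R, (A * X * B).IsDiag) : A * B ≠ 1 := by
  intro hAB
  have := Fintype.ofFinite n
  have hB : B = 0 := eq_zero_of_forall_isDiag_mul fun Y => by
    have hY : A * (B * Y) * B = Y * B := by
      rw [← Matrix.mul_assoc A, hAB, Matrix.one_mul]
    exact hY ▸ hdiag (B * Y)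
  rw [hB, Matrix.mul_zero] at hAB
  exact zero_ne_one hAB

end

theorem stmt_7_general (R n : Type*) [Semiring R] [Nontrivial R]
    [Fintype n] [DecidableEq n] [Nontrivial n] :
    ¬ ∃ A B : Matrix n n R, ∀ X : Matrix n n R,
      Matrix.diagonal (fun i => X i i) = A * X * B := by
  rintro ⟨A, B, h⟩
  have hdiag (X : Matrix n n R) : (A * X * B).IsDiag := h X ▸ Matrix.isDiag_diagonal _
  have hAB : A * B = 1 := by simpa using (h 1).symm
  exact mul_ne_one_of_forall_isDiag_mul_mul hdiag hAB

/-- The map on `2 × 2` matrices over a field `K` that zeroes out the off-diagonal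
entries cannot be written as `X ↦ A * X * B` for fixed matrices `A`, `B`. -/
theorem stmt_7 (K : Type*) [Field K] :
    ¬ ∃ A B : Matrix (Fin 2) (Fin 2) K,
        ∀ X : Matrix (Fin 2) (Fin 2) K,
          Matrix.diagonal (fun i => X i i) = A * X * B :=
  stmt_7_general K (Fin 2)
end
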